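/- Let R be a ring and X a chain complex of left R-modules with a filtration (F^p)_{p∈ℤ}. For p, n ∈ ℤ let ι^p : F^p → X be the inclusion morphism of complexes and U^p_n := Im(H_n(ι^p)) ⊆ H_n(X). Then U^{p−1}_n ⊆ U^p_n and there is an isomorphism of R-modules U^p_n/U^{p−1}_n ≅ (Ker ∂_n ∩ F^p_n)/((Ker ∂_n ∩ F^{p−1}_n) + (Im ∂_{n+1} ∩ F^p_n)). -/

import Mathlib

open Submodule

variable {R : Type*} [Ring R]

section FiltrationSetup

variable (X : ℤ → Type*) [∀ n, AddCommGroup (X n)] [∀ n, Module R (X n)]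

/-- The `m`-th homology of a ℤ-indexed complex `(Y, e)` (with the homological-complex
convention `e i j : Y i →ₗ Y j`, nonzero only for `j = i − 1`):
`H_m = Ker(e m (m−1)) / Im(e (m+1) m)`. -/
abbrev homologyAt (Y : ℤ → Type*) [∀ n, AddCommGroup (Y n)] [∀ n, Module R (Y n)]
    (e : ∀ i j : ℤ, Y i →ₗ[R] Y j) (m : ℤ) :=
  ↥(LinearMap.ker (e m (m - 1))) ⧸
    Submodule.comap (LinearMap.ker (e m (m - 1))).subtype (LinearMap.range (e (m + 1) m))

variable (d : ∀ i j : ℤ, X i →ₗ[R] X j) (F : ℤ → ∀ n : ℤ, Submodule R (X n))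
variable (hsub : ∀ p i j : ℤ, ∀ x : X i, x ∈ F p i → d i j x ∈ F p j)

/-- The differentials of the subcomplex `F^p`, given by restricting those of `X`. -/
def subD (p i j : ℤ) : ↥(F p i) →ₗ[R] ↥(F p j) :=
  (d i j).restrict (fun x hx => hsub p i j x hx)

/-- The inclusion `Ker(∂_n^{F^p}) → Ker(∂_n^X)`. -/
def inclKer (p n : ℤ) :
    ↥(LinearMap.ker (subD X d F hsub p n (n - 1))) →ₗ[R] ↥(LinearMap.ker (d n (n - 1))) :=
  LinearMap.codRestrict _
    ((F p n).subtype.comp (LinearMap.ker (subD X d F hsub p n (n - 1))).subtype)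
    (fun x => by
      have hx : subD X d F hsub p n (n - 1) x.1 = 0 := x.2
      have h' : d n (n - 1) (x.1 : X n) = 0 := congrArg Subtype.val hx
      simpa [LinearMap.mem_ker] using h')

/-- The map `H_n(ι^p) : H_n(F^p) → H_n(X)` induced on homology by the inclusion
`ι^p : F^p → X`. -/
def homologyMapIncl (p n : ℤ) :
    homologyAt (fun m => ↥(F p m)) (subD X d F hsub p) n →ₗ[R] homologyAt X d n :=
  Submodule.mapQ _ _ (inclKer X d F hsub p n)
    (by
      rintro x ⟨y, hy⟩
      exact ⟨(y : X (n + 1)), congrArg Subtype.val hy⟩)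

end FiltrationSetup

/-- A class lies in the image of `H_n(F^p) → H_n(X)` iff it is represented by a cycle in `F^p_n`. -/
theorem mem_range_homologyMapIncl
    (X : ℤ → Type*) [∀ n, AddCommGroup (X n)] [∀ n, Module R (X n)]
    (d : ∀ i j : ℤ, X i →ₗ[R] X j) (F : ℤ → ∀ n : ℤ, Submodule R (X n))
    (hsub : ∀ p i j : ℤ, ∀ x : X i, x ∈ F p i → d i j x ∈ F p j)
    (p n : ℤ) (u : homologyAt X d n) :
    u ∈ LinearMap.range (homologyMapIncl X d F hsub p n) ↔
      ∃ z : LinearMap.ker (d n (n - 1)), (z : X n) ∈ F p n ∧ Submodule.Quotient.mk z = u := by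
  constructor
  · rintro ⟨v, rfl⟩
    obtain ⟨y, rfl⟩ := Submodule.Quotient.mk_surjective _ v
    exact ⟨inclKer X d F hsub p n y, y.1.2, rfl⟩
  · rintro ⟨z, hz, rfl⟩
    exact ⟨Submodule.Quotient.mk ⟨⟨z, hz⟩, Subtype.ext z.2⟩, rfl⟩

/-- Let `R` be a ring and `X` a chain complex of left `R`-modules with a
filtration `(F p)ₚ` by subcomplexes; for `p n : ℤ` let `U^p_n := Im(H_n(ι^p)) ⊆ H_n(X)` where
`ι^p : F^p → X` is the inclusion.  Then `U^{p−1}_n ⊆ U^p_n` and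
`U^p_n/U^{p−1}_n ≅ (Ker ∂_n ∩ F^p_n)/((Ker ∂_n ∩ F^{p−1}_n) + (Im ∂_{n+1} ∩ F^p_n))`
as `R`-modules. -/
theorem filtration_homology_graded_piece_iso
    (X : ℤ → Type*) [∀ n, AddCommGroup (X n)] [∀ n, Module R (X n)]
    (d : ∀ i j : ℤ, X i →ₗ[R] X j)
    (hshape : ∀ i j : ℤ, j ≠ i - 1 → d i j = 0)
    (hdd : ∀ i j k : ℤ, ∀ x : X i, d j k (d i j x) = 0)
    (F : ℤ → ∀ n : ℤ, Submodule R (X n))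
    (hmono : ∀ p n : ℤ, F (p - 1) n ≤ F p n)
    (hsub : ∀ p i j : ℤ, ∀ x : X i, x ∈ F p i → d i j x ∈ F p j)
    (p n : ℤ)
    (U : ℤ → Submodule R (homologyAt X d n))
    (hU : ∀ p' : ℤ, U p' = LinearMap.range (homologyMapIncl X d F hsub p' n)) :
    U (p - 1) ≤ U p ∧
      Nonempty
        ((↥(U p) ⧸ Submodule.comap (U p).subtype (U (p - 1))) ≃ₗ[R]
          ↥(LinearMap.ker (d n (n - 1)) ⊓ F p n) ⧸
            Submodule.comap (LinearMap.ker (d n (n - 1)) ⊓ F p n).subtype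
              ((LinearMap.ker (d n (n - 1)) ⊓ F (p - 1) n) ⊔
                (LinearMap.range (d (n + 1) n) ⊓ F p n))) := by
  have hmem : ∀ q u, u ∈ U q ↔
      ∃ z : LinearMap.ker (d n (n - 1)), (z : X n) ∈ F q n ∧ Submodule.Quotient.mk z = u :=
    fun q u => by rw [hU q, mem_range_homologyMapIncl]
  refine ⟨fun u hu => ?_, ?_⟩
  · obtain ⟨z, hz, rfl⟩ := (hmem _ _).1 hu
    exact (hmem _ _).2 ⟨z, hmono p n hz, rfl⟩
  let classOf : ↥(LinearMap.ker (d n (n - 1)) ⊓ F p n) →ₗ[R] ↥(U p) :=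
    LinearMap.codRestrict (U p)
      ((Submodule.mkQ _).comp (Submodule.inclusion inf_le_left))
      (fun z => (hmem _ _).2 ⟨Submodule.inclusion inf_le_left z, z.2.2, rfl⟩)
  have classOf_surjective : Function.Surjective classOf := by
    rintro ⟨u, hu⟩
    obtain ⟨z, hz, rfl⟩ := (hmem _ _).1 hu
    exact ⟨⟨z, z.2, hz⟩, rfl⟩
  let gradedClass := (Submodule.comap (U p).subtype (U (p - 1))).mkQ.comp classOf
  have gradedClass_surjective : Function.Surjective gradedClass :=
    (Submodule.mkQ_surjective _).comp classOf_surjective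
  have ker_gradedClass : LinearMap.ker gradedClass =
      Submodule.comap (LinearMap.ker (d n (n - 1)) ⊓ F p n).subtype
        ((LinearMap.ker (d n (n - 1)) ⊓ F (p - 1) n) ⊔
          (LinearMap.range (d (n + 1) n) ⊓ F p n)) := by
    ext z
    have hker : z ∈ LinearMap.ker gradedClass ↔ (classOf z : homologyAt X d n) ∈ U (p - 1) :=
      Submodule.Quotient.mk_eq_zero _
    rw [hker, hmem, Submodule.mem_comap, Submodule.mem_sup]
    constructor
    · rintro ⟨w, hw, hwz⟩
      have hb : (z : X n) - w ∈ LinearMap.range (d (n + 1) n) :=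
        (Submodule.Quotient.eq
          (Submodule.comap (LinearMap.ker (d n (n - 1))).subtype _)).1 hwz.symm
      exact ⟨w, ⟨w.2, hw⟩, z - w, ⟨hb, sub_mem z.2.2 (hmono p n hw)⟩, add_sub_cancel _ _⟩
    · rintro ⟨w, ⟨hwk, hwF⟩, b, ⟨hb, -⟩, hwb⟩
      refine ⟨⟨w, hwk⟩, hwF, Eq.symm ((Submodule.Quotient.eq _).2 ?_)⟩
      have hzw : (z : X n) - w = b := sub_eq_of_eq_add' hwb.symm
      change (z : X n) - w ∈ LinearMap.range (d (n + 1) n)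
      rwa [hzw]
  exact ⟨((Submodule.quotEquivOfEq _ _ ker_gradedClass.symm).trans
    (gradedClass.quotKerEquivOfSurjective gradedClass_surjective)).symm⟩
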